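/- (Local ergotropy splits for non-interacting Hamiltonians) Let H := A ⊗ I_m + I_n ⊗ B with A an n×n and B an m×m Hermitian matrix, and let ρ be an nm×nm density matrix with marginals ρ_a (entries (ρ_a)_{i i'} = ∑_j ρ_{(i,j),(i',j)}) and ρ_b (entries (ρ_b)_{j j'} = ∑_i ρ_{(i,j),(i,j')}). Then inf_{U,V} Tr((U⊗V) ρ (U⊗V)* H) = inf_U Tr(U ρ_a U* A) + inf_V Tr(V ρ_b V* B), where the infima run over n×n unitaries U and m×m unitaries V. -/

import Mathlib

open scoped BigOperators ComplexOrder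
open Matrix Kronecker

/-- Nondecreasing rearrangement of a finite real-valued family. -/
noncomputable def sortUp {ι : Type*} [Fintype ι] (f : ι → ℝ) : Fin (Fintype.card ι) → ℝ :=
  (f ∘ (Fintype.equivFin ι).symm) ∘ Tuple.sort (f ∘ (Fintype.equivFin ι).symm)

/-- Nonincreasing rearrangement of a finite real-valued family. -/
noncomputable def sortDown {ι : Type*} [Fintype ι] (f : ι → ℝ) : Fin (Fintype.card ι) → ℝ :=
  fun i => sortUp f i.rev

/-- Ergotropy ξ(ρ,H) = Tr(ρH) − inf over unitaries V of Tr(V ρ V* H). -/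
noncomputable def ergotropy {ι : Type*} [Fintype ι] [DecidableEq ι] (ρ H : Matrix ι ι ℂ) : ℝ :=
  ((ρ * H).trace).re -
    ⨅ V : Matrix.unitaryGroup ι ℂ,
      (((V : Matrix ι ι ℂ) * ρ * star (V : Matrix ι ι ℂ) * H).trace).re

/-- Passive energy E_p(ρ,H) = ∑ λ_i^↓ ε_i^↑. -/
noncomputable def passiveEnergy {ι : Type*} [Fintype ι] [DecidableEq ι]
    {ρ H : Matrix ι ι ℂ} (hρ : ρ.IsHermitian) (hH : H.IsHermitian) : ℝ :=
  ∑ i, sortDown hρ.eigenvalues i * sortUp hH.eigenvalues i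

/-- |u⟩⟨u|, the matrix with entries u_i conj(u_j). -/
noncomputable def ketbra {ι : Type*} (u : ι → ℂ) : Matrix ι ι ℂ := Matrix.vecMulVec u (star u)

/-- Tensor (Kronecker) product of vectors: (u ⊗ v)_(i,j) = u_i v_j. -/
noncomputable def vecTensor {ιa ιb : Type*} (u : ιa → ℂ) (v : ιb → ℂ) : ιa × ιb → ℂ :=
  fun p => u p.1 * v p.2

/-- The local measurement channel Π(ρ) = ∑_k (P_k ⊗ I) ρ (P_k ⊗ I). -/
noncomputable def pinch {ιa ιb K : Type*} [Fintype ιa] [Fintype ιb] [Fintype K]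
    [DecidableEq ιa] [DecidableEq ιb]
    (P : K → Matrix ιa ιa ℂ) (ρ : Matrix (ιa × ιb) (ιa × ιb) ℂ) :
    Matrix (ιa × ιb) (ιa × ιb) ℂ :=
  ∑ k, (P k ⊗ₖ (1 : Matrix ιb ιb ℂ)) * ρ * (P k ⊗ₖ (1 : Matrix ιb ιb ℂ))

/-- Local ergotropy ξ^l(ρ,H) = Tr(ρH) − inf over local unitaries U⊗V of Tr((U⊗V) ρ (U⊗V)* H). -/
noncomputable def localErgotropy {n m : ℕ}
    (ρ H : Matrix (Fin n × Fin m) (Fin n × Fin m) ℂ) : ℝ :=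
  ((ρ * H).trace).re -
    ⨅ W : Matrix.unitaryGroup (Fin n) ℂ × Matrix.unitaryGroup (Fin m) ℂ,
      ((((W.1 : Matrix (Fin n) (Fin n) ℂ) ⊗ₖ (W.2 : Matrix (Fin m) (Fin m) ℂ)) * ρ *
        star ((W.1 : Matrix (Fin n) (Fin n) ℂ) ⊗ₖ (W.2 : Matrix (Fin m) (Fin m) ℂ)) * H).trace).re

/-- First marginal (partial trace over the second factor). -/
noncomputable def marginalA {n m : ℕ} (ρ : Matrix (Fin n × Fin m) (Fin n × Fin m) ℂ) :
    Matrix (Fin n) (Fin n) ℂ :=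
  Matrix.of fun i i' => ∑ j, ρ (i, j) (i', j)

/-- Second marginal (partial trace over the first factor). -/
noncomputable def marginalB {n m : ℕ} (ρ : Matrix (Fin n × Fin m) (Fin n × Fin m) ℂ) :
    Matrix (Fin m) (Fin m) ℂ :=
  Matrix.of fun j j' => ∑ i, ρ (i, j) (i, j')

theorem aux_traceA {n m : ℕ} (ρ : Matrix (Fin n × Fin m) (Fin n × Fin m) ℂ)
    (X : Matrix (Fin n) (Fin n) ℂ) :
    (ρ * (X ⊗ₖ (1 : Matrix (Fin m) (Fin m) ℂ))).trace = (marginalA ρ * X).trace := by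
  simp only [Matrix.trace, Matrix.diag, Matrix.mul_apply, marginalA, Matrix.of_apply,
    Fintype.sum_prod_type, Matrix.kroneckerMap_apply, Matrix.one_apply, mul_ite, mul_one, mul_zero,
    Finset.sum_ite_eq', Finset.mem_univ, if_true, Finset.sum_mul]
  refine Finset.sum_congr rfl fun i _ => ?_
  rw [Finset.sum_comm]

theorem aux_traceB {n m : ℕ} (ρ : Matrix (Fin n × Fin m) (Fin n × Fin m) ℂ)
    (X : Matrix (Fin m) (Fin m) ℂ) :
    (ρ * ((1 : Matrix (Fin n) (Fin n) ℂ) ⊗ₖ X)).trace = (marginalB ρ * X).trace := by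
  simp only [Matrix.trace, Matrix.diag, Matrix.mul_apply, marginalB, Matrix.of_apply,
    Fintype.sum_prod_type, Matrix.kroneckerMap_apply, Matrix.one_apply, ite_mul, one_mul, zero_mul,
    mul_ite, mul_zero, Finset.sum_mul]
  rw [Finset.sum_comm]
  refine Finset.sum_congr rfl fun j _ => ?_
  conv_rhs => rw [Finset.sum_comm]
  refine Finset.sum_congr rfl fun i _ => ?_
  rw [Finset.sum_comm]
  refine Finset.sum_congr rfl fun k _ => ?_
  simp

theorem aux_cyc {ι : Type*} [Fintype ι] (W R K : Matrix ι ι ℂ) :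
    (W * R * star W * K).trace = (R * (star W * K * W)).trace := by
  rw [Matrix.mul_assoc, Matrix.mul_assoc, Matrix.trace_mul_comm, Matrix.mul_assoc]

theorem aux_bdd {n : ℕ} (R K : Matrix (Fin n) (Fin n) ℂ) :
    BddBelow (Set.range fun U : Matrix.unitaryGroup (Fin n) ℂ =>
      (((U : Matrix (Fin n) (Fin n) ℂ) * R * star (U : Matrix (Fin n) (Fin n) ℂ) * K).trace).re) := by
  have hc : IsCompact (Set.univ.pi fun _ : Fin n => Set.univ.pi fun _ : Fin n =>
      Metric.closedBall (0 : ℂ) 1) :=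
    isCompact_univ_pi fun _ => isCompact_univ_pi fun _ => isCompact_closedBall _ _
  have hf : Continuous fun U : Matrix (Fin n) (Fin n) ℂ => ((U * R * star U * K).trace).re := by
    simp only [Matrix.star_eq_conjTranspose]
    exact Complex.continuous_re.comp (Continuous.matrix_trace
      (((continuous_id.matrix_mul continuous_const).matrix_mul
        continuous_id.matrix_conjTranspose).matrix_mul continuous_const))
  refine (hc.bddBelow_image (f := fun U : Matrix (Fin n) (Fin n) ℂ =>
    ((U * R * star U * K).trace).re) hf.continuousOn).mono ?_
  rintro _ ⟨U, rfl⟩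
  refine ⟨(U : Matrix (Fin n) (Fin n) ℂ), fun i _ j _ => ?_, rfl⟩
  rw [mem_closedBall_zero_iff]
  exact entry_norm_bound_of_unitary U.2 i j

/-- for non-interacting Hamiltonians, the local passive-energy
optimization splits into the two marginals. -/
theorem local_inf_splits_noninteracting {n m : ℕ}
    {A : Matrix (Fin n) (Fin n) ℂ} {B : Matrix (Fin m) (Fin m) ℂ}
    (hA : A.IsHermitian) (hB : B.IsHermitian)
    (H : Matrix (Fin n × Fin m) (Fin n × Fin m) ℂ)
    (hHdef : H = A ⊗ₖ (1 : Matrix (Fin m) (Fin m) ℂ)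
        + (1 : Matrix (Fin n) (Fin n) ℂ) ⊗ₖ B)
    {ρ : Matrix (Fin n × Fin m) (Fin n × Fin m) ℂ}
    (hρ : ρ.PosSemidef) (hρtr : ρ.trace = 1) :
    (⨅ W : Matrix.unitaryGroup (Fin n) ℂ × Matrix.unitaryGroup (Fin m) ℂ,
        ((((W.1 : Matrix (Fin n) (Fin n) ℂ) ⊗ₖ (W.2 : Matrix (Fin m) (Fin m) ℂ)) * ρ *
          star ((W.1 : Matrix (Fin n) (Fin n) ℂ) ⊗ₖ (W.2 : Matrix (Fin m) (Fin m) ℂ)) *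
            H).trace).re)
      = (⨅ U : Matrix.unitaryGroup (Fin n) ℂ,
          (((U : Matrix (Fin n) (Fin n) ℂ) * marginalA ρ *
            star (U : Matrix (Fin n) (Fin n) ℂ) * A).trace).re)
        + ⨅ V : Matrix.unitaryGroup (Fin m) ℂ,
            (((V : Matrix (Fin m) (Fin m) ℂ) * marginalB ρ *
              star (V : Matrix (Fin m) (Fin m) ℂ) * B).trace).re := by
  have key : ∀ W : Matrix.unitaryGroup (Fin n) ℂ × Matrix.unitaryGroup (Fin m) ℂ,
      ((((W.1 : Matrix (Fin n) (Fin n) ℂ) ⊗ₖ (W.2 : Matrix (Fin m) (Fin m) ℂ)) * ρ *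
          star ((W.1 : Matrix (Fin n) (Fin n) ℂ) ⊗ₖ (W.2 : Matrix (Fin m) (Fin m) ℂ)) *
            H).trace).re =
        (((W.1 : Matrix (Fin n) (Fin n) ℂ) * marginalA ρ *
            star (W.1 : Matrix (Fin n) (Fin n) ℂ) * A).trace).re +
        (((W.2 : Matrix (Fin m) (Fin m) ℂ) * marginalB ρ *
              star (W.2 : Matrix (Fin m) (Fin m) ℂ) * B).trace).re := by
    rintro ⟨U, V⟩
    have hU : (U : Matrix (Fin n) (Fin n) ℂ)ᴴ * (U : Matrix (Fin n) (Fin n) ℂ) = 1 :=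
      Matrix.mem_unitaryGroup_iff'.1 U.2
    have hV : (V : Matrix (Fin m) (Fin m) ℂ)ᴴ * (V : Matrix (Fin m) (Fin m) ℂ) = 1 :=
      Matrix.mem_unitaryGroup_iff'.1 V.2
    rw [← Complex.add_re, aux_cyc, aux_cyc, aux_cyc, ← aux_traceA, ← aux_traceB,
      ← Matrix.trace_add, ← Matrix.mul_add, hHdef]
    simp only [Matrix.star_eq_conjTranspose, Matrix.conjTranspose_kronecker, Matrix.mul_add,
      Matrix.add_mul, ← Matrix.mul_kronecker_mul, Matrix.mul_one, hU, hV]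
  simp only [key]
  have bA := aux_bdd (marginalA ρ) A
  have bB := aux_bdd (marginalB ρ) B
  apply le_antisymm
  · rw [← sub_le_iff_le_add]
    refine le_ciInf fun U => ?_
    rw [sub_le_comm]
    refine le_ciInf fun V => ?_
    rw [sub_le_iff_le_add']
    refine ciInf_le ?_ (U, V)
    obtain ⟨a, ha⟩ := bA
    obtain ⟨b, hb⟩ := bB
    refine ⟨a + b, ?_⟩
    rintro _ ⟨W, rfl⟩
    exact add_le_add (ha ⟨W.1, rfl⟩) (hb ⟨W.2, rfl⟩)
  · exact le_ciInf fun W => add_le_add (ciInf_le bA W.1) (ciInf_le bB W.2)
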